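/- Assume the irrationality hypothesis that F(5/12,7/12)/F(7/12,17/12) is not of the form a + b√3 with a, b rational. Then in the complex numbers, F(1/12,11/12) + 16i·F(11/12,13/12) = ζ₃²·(−4·F(5/12,7/12) − 4i·F(7/12,17/12)), where ζ₃ = e^{2πi/3}. -/

import Mathlib

/-- The Pochhammer symbol (x)_k = x(x+1)⋯(x+k−1). -/
noncomputable def poch (x : ℝ) (k : ℕ) : ℝ := ∏ i ∈ Finset.range k, (x + i)

/-- The hypergeometric series ₃F₂(a1,a2,a3;b1,b2;1). -/
noncomputable def threeF2 (a1 a2 a3 b1 b2 : ℝ) : ℝ :=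
  ∑' k : ℕ, poch a1 k * poch a2 k * poch a3 k /
    (poch b1 k * poch b2 k * (Nat.factorial k : ℝ))

/-- The Beta function B(a,b) = Γ(a)Γ(b)/Γ(a+b). -/
noncomputable def betaFn (a b : ℝ) : ℝ :=
  Real.Gamma a * Real.Gamma b / Real.Gamma (a + b)

/-- The normalized hypergeometric value
F(r,s) = (2^{1−4r}·B(r,s−r)/N(r)) · ₃F₂(1/2,1/2,r;1,s;1), where N(r) = 2·den(r). -/
noncomputable def Fval (r s : ℚ) : ℝ :=
  (2:ℝ) ^ ((1:ℝ) - 4 * (r:ℝ)) * betaFn (r:ℝ) ((s:ℝ) - (r:ℝ)) / (2 * (r.den : ℝ)) *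
    threeF2 (1/2) (1/2) (r:ℝ) 1 (s:ℝ)

section EllipticMoments

open MeasureTheory Set Filter Topology
open scoped ENNReal

section Pochhammer

lemma poch_pos {x : ℝ} (hx : 0 < x) (k : ℕ) : 0 < poch x k :=
  Finset.prod_pos fun i _ => by positivity

lemma poch_succ (x : ℝ) (k : ℕ) : poch x (k + 1) = poch x k * (x + k) := by
  simp [poch, Finset.prod_range_succ]

lemma poch_one (k : ℕ) : poch 1 k = k.factorial := by
  induction k with
  | zero => simp [poch]
  | succ k ih => rw [poch_succ, ih, Nat.factorial_succ]; push_cast; ring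

lemma poch_eq_ascPochhammer_eval (x : ℝ) (k : ℕ) : poch x k = (ascPochhammer ℝ k).eval x := by
  induction k with
  | zero => simp [poch]
  | succ k ih => simp [poch_succ, ascPochhammer_succ_right, ih]

lemma Gamma_add_natCast {x : ℝ} (hx : 0 < x) (k : ℕ) :
    Real.Gamma (x + k) = poch x k * Real.Gamma x := by
  induction k with
  | zero => simp [poch]
  | succ k ih =>
    have : x + (k : ℝ) ≠ 0 := by positivity
    rw [poch_succ, Nat.cast_succ, ← add_assoc, Real.Gamma_add_one this, ih]
    ring

lemma betaFn_pos {p q : ℝ} (hp : 0 < p) (hq : 0 < q) : 0 < betaFn p q :=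
  ProbabilityTheory.beta_pos hp hq

lemma betaFn_add_natCast {p q : ℝ} (hp : 0 < p) (hq : 0 < q) (k : ℕ) :
    betaFn (p + k) q = poch p k / poch (p + q) k * betaFn p q := by
  have h : p + k + q = p + q + k := by ring
  have h1 := (poch_pos (add_pos hp hq) k).ne'
  have h2 := (Real.Gamma_pos_of_pos (add_pos hp hq)).ne'
  rw [betaFn, betaFn, h, Gamma_add_natCast hp, Gamma_add_natCast (add_pos hp hq)]
  field_simp

lemma betaFn_natCast_add_half (k : ℕ) :
    betaFn (1 / 2 + k) (1 / 2) = Real.pi * (poch (1 / 2) k / k.factorial) := by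
  rw [betaFn_add_natCast (by norm_num) (by norm_num), show (1 / 2 + 1 / 2 : ℝ) = 1 by norm_num,
    poch_one, betaFn, show (1 / 2 + 1 / 2 : ℝ) = 1 by norm_num, Real.Gamma_one,
    Real.Gamma_one_half_eq, div_one, Real.mul_self_sqrt Real.pi_pos.le]
  ring

lemma hasSum_poch_mul_pow (a : ℝ) {x : ℝ} (hx : |x| < 1) :
    HasSum (fun k : ℕ => poch a k / k.factorial * x ^ k) ((1 - x) ^ (-a)) := by
  have h := (Real.one_div_one_sub_rpow_hasFPowerSeriesOnBall_zero a).hasSum (y := x)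
    (by simpa [enorm_eq_nnnorm, ← NNReal.coe_lt_coe] using hx)
  have hx' : 0 ≤ 1 - x := by linarith [le_abs_self x]
  rw [zero_add, one_div, ← Real.rpow_neg hx'] at h
  refine (congrArg (HasSum · ((1 - x) ^ (-a))) (funext fun k => ?_)).mpr h
  have h1 := Ring.factorial_nsmul_multichoose_eq_ascPochhammer a k
  rw [Polynomial.ascPochhammer_smeval_eq_eval, ← poch_eq_ascPochhammer_eval, nsmul_eq_mul] at h1
  simp only [FormalMultilinearSeries.ofScalars_apply_eq, smul_eq_mul, ← Ring.multichoose_eq, ← h1]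
  field_simp

lemma lintegral_rpow_mul_one_sub_rpow {p q : ℝ} (hp : 0 < p) (hq : 0 < q) :
    ∫⁻ t in Ioo (0 : ℝ) 1, ENNReal.ofReal (t ^ (p - 1) * (1 - t) ^ (q - 1)) =
      ENNReal.ofReal (betaFn p q) := by
  have hB := betaFn_pos hp hq
  have h := ProbabilityTheory.lintegral_betaPDF_eq_one hp hq
  rw [ProbabilityTheory.lintegral_betaPDF] at h
  change ∫⁻ x in Ioo (0 : ℝ) 1,
    ENNReal.ofReal (1 / betaFn p q * x ^ (p - 1) * (1 - x) ^ (q - 1)) = 1 at h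
  have h2 : ∀ t : ℝ, ENNReal.ofReal (t ^ (p - 1) * (1 - t) ^ (q - 1)) =
      ENNReal.ofReal (betaFn p q) *
        ENNReal.ofReal (1 / betaFn p q * t ^ (p - 1) * (1 - t) ^ (q - 1)) := fun t => by
    rw [← ENNReal.ofReal_mul hB.le]
    congr 1
    field_simp
  simp_rw [h2]
  rw [lintegral_const_mul' _ _ ENNReal.ofReal_ne_top, h, mul_one]

end Pochhammer

/-- The complete elliptic integral `π · ₂F₁(1/2, 1/2; 1; t)` in algebraic form. -/
noncomputable def ellK (t : ℝ) : ℝ≥0∞ :=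
  ∫⁻ y in Ioo (0 : ℝ) 1,
    ENNReal.ofReal (y ^ (-1 / 2 : ℝ) * (1 - y) ^ (-1 / 2 : ℝ) * (1 - t * y) ^ (-1 / 2 : ℝ))

/-- The Beta moments of the complete elliptic integral. -/
noncomputable def ellMoment (p q : ℝ) : ℝ≥0∞ :=
  ∫⁻ t in Ioo (0 : ℝ) 1, ENNReal.ofReal (t ^ (p - 1) * (1 - t) ^ (q - 1)) * ellK t

lemma ellK_eq_tsum {t : ℝ} (ht : t ∈ Ioo (0 : ℝ) 1) :
    ellK t = ∑' k : ℕ,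
      ENNReal.ofReal (Real.pi * (poch (1 / 2) k / k.factorial) ^ 2) * ENNReal.ofReal (t ^ k) := by
  have hc (k : ℕ) : 0 < poch (1 / 2) k / k.factorial :=
    div_pos (poch_pos (by norm_num) k) (by positivity)
  have ht0 := ht.1
  calc ellK t
    _ = ∫⁻ y in Ioo (0 : ℝ) 1, ∑' k : ℕ, ENNReal.ofReal (poch (1 / 2) k / k.factorial * t ^ k) *
          ENNReal.ofReal (y ^ ((1 / 2 + k : ℝ) - 1) * (1 - y) ^ ((1 / 2 : ℝ) - 1)) := by
        refine setLIntegral_congr_fun measurableSet_Ioo fun y hy => ?_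
        obtain ⟨hy0, hy1⟩ := hy
        have hty : |t * y| < 1 := by
          rw [abs_of_pos (mul_pos ht0 hy0)]
          nlinarith [ht.2]
        have hs := hasSum_poch_mul_pow (1 / 2) hty
        have hy1' : 0 < 1 - y := by linarith
        have hs' := hs.mul_left (y ^ (-1 / 2 : ℝ) * (1 - y) ^ (-1 / 2 : ℝ))
        rw [show (-(1 / 2) : ℝ) = -1 / 2 by norm_num] at hs'
        change ENNReal.ofReal _ = _
        rw [← hs'.tsum_eq, ENNReal.ofReal_tsum_of_nonneg
          (fun k => by have := hc k; positivity) hs'.summable]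
        refine tsum_congr fun k => ?_
        have := hc k
        rw [← ENNReal.ofReal_mul (by positivity)]
        congr 1
        rw [show (1 / 2 + k : ℝ) - 1 = -1 / 2 + k by ring, Real.rpow_add_natCast hy0.ne', mul_pow]
        norm_num
        ring
    _ = _ := by
        rw [lintegral_tsum fun k => (by fun_prop)]
        refine tsum_congr fun k => ?_
        have := hc k
        rw [lintegral_const_mul' _ _ ENNReal.ofReal_ne_top,
          lintegral_rpow_mul_one_sub_rpow (by positivity) (by norm_num), betaFn_natCast_add_half,
          ← ENNReal.ofReal_mul (by positivity), ← ENNReal.ofReal_mul (by positivity)]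
        congr 1
        ring

lemma ellMoment_toReal {p q : ℝ} (hp : 0 < p) (hq : 0 < q) :
    (ellMoment p q).toReal = Real.pi * (betaFn p q * threeF2 (1 / 2) (1 / 2) p 1 (p + q)) := by
  have hc (k : ℕ) : 0 < poch (1 / 2) k / k.factorial :=
    div_pos (poch_pos (by norm_num) k) (by positivity)
  have hB := betaFn_pos hp hq
  have h : ellMoment p q = ∑' k : ℕ,
      ENNReal.ofReal (Real.pi * (poch (1 / 2) k / k.factorial) ^ 2 * betaFn (p + k) q) := by
    calc ellMoment p q
      _ = ∫⁻ t in Ioo (0 : ℝ) 1, ∑' k : ℕ,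
            ENNReal.ofReal (Real.pi * (poch (1 / 2) k / k.factorial) ^ 2) *
              ENNReal.ofReal (t ^ ((p + k) - 1) * (1 - t) ^ (q - 1)) := by
          refine setLIntegral_congr_fun measurableSet_Ioo fun t ht => ?_
          have ht0 := ht.1
          have ht1 : 0 < 1 - t := by linarith [ht.2]
          change _ * ellK t = _
          rw [ellK_eq_tsum ht, ← ENNReal.tsum_mul_left]
          refine tsum_congr fun k => ?_
          rw [mul_left_comm, ← ENNReal.ofReal_mul (by positivity)]
          congr 2
          rw [show p + k - 1 = p - 1 + k by ring, Real.rpow_add_natCast ht0.ne']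
          ring
      _ = _ := by
          rw [lintegral_tsum fun k => (by fun_prop)]
          refine tsum_congr fun k => ?_
          have := hc k
          rw [lintegral_const_mul' _ _ ENNReal.ofReal_ne_top,
            lintegral_rpow_mul_one_sub_rpow (by positivity) hq,
            ← ENNReal.ofReal_mul (by positivity)]
  rw [h, ENNReal.tsum_toReal_eq fun k => ENNReal.ofReal_ne_top, ← mul_assoc, threeF2,
    ← tsum_mul_left]
  refine tsum_congr fun k => ?_
  have h1 := poch_pos hp k
  have h2 := poch_pos (add_pos hp hq) k
  rw [betaFn_add_natCast hp hq, ENNReal.toReal_ofReal (by positivity), poch_one]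
  field_simp

lemma measurable_ellK : Measurable ellK := by
  unfold ellK
  refine Measurable.lintegral_prod_right
    (f := fun (t y : ℝ) => ENNReal.ofReal
      (y ^ (-1 / 2 : ℝ) * (1 - y) ^ (-1 / 2 : ℝ) * (1 - t * y) ^ (-1 / 2 : ℝ))) ?_
  unfold Function.uncurry
  fun_prop

section Finiteness

lemma ellK_le {a t : ℝ} (ha : 0 < a) (ha' : a ≤ 1 / 2) (ht : t ∈ Ioo (0 : ℝ) 1) :
    ellK t ≤ ENNReal.ofReal ((1 - t) ^ (-a)) * ENNReal.ofReal (betaFn (1 / 2) a) := by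
  rw [← lintegral_rpow_mul_one_sub_rpow (by norm_num) ha,
    ← lintegral_const_mul' _ _ ENNReal.ofReal_ne_top]
  refine setLIntegral_mono' measurableSet_Ioo fun y hy => ?_
  obtain ⟨ht0, ht1⟩ := ht
  obtain ⟨hy0, hy1⟩ := hy
  have h1 : 0 < 1 - y := by linarith
  have h2 : 0 < 1 - t := by linarith
  have h3 : 1 - y ≤ 1 - t * y := by nlinarith
  have h4 : 1 - t ≤ 1 - t * y := by nlinarith
  rw [← ENNReal.ofReal_mul (by positivity)]
  refine ENNReal.ofReal_le_ofReal ?_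
  calc y ^ (-1 / 2 : ℝ) * (1 - y) ^ (-1 / 2 : ℝ) * (1 - t * y) ^ (-1 / 2 : ℝ)
    _ = y ^ (-1 / 2 : ℝ) * (1 - y) ^ (-1 / 2 : ℝ) *
        ((1 - t * y) ^ (-a) * (1 - t * y) ^ (a - 1 / 2)) := by
      rw [← Real.rpow_add (by linarith)]
      ring_nf
    _ ≤ y ^ (-1 / 2 : ℝ) * (1 - y) ^ (-1 / 2 : ℝ) *
        ((1 - t) ^ (-a) * (1 - y) ^ (a - 1 / 2)) := by
      have h5 : 0 < 1 - t * y := by linarith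
      exact mul_le_mul_of_nonneg_left
        (mul_le_mul (Real.rpow_le_rpow_of_nonpos h2 h4 (by linarith))
          (Real.rpow_le_rpow_of_nonpos h1 h3 (by linarith)) (by positivity) (by positivity))
        (by positivity)
    _ = (1 - t) ^ (-a) * (y ^ (1 / 2 - 1 : ℝ) * (1 - y) ^ (a - 1)) := by
      rw [show a - 1 = -1 / 2 + (a - 1 / 2) by ring, Real.rpow_add h1,
        show (1 / 2 - 1 : ℝ) = -1 / 2 by norm_num]
      ring

lemma ellMoment_ne_top {p q : ℝ} (hp : 0 < p) (hq : 0 < q) : ellMoment p q ≠ ∞ := by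
  obtain ⟨a, ha, ha', haq⟩ : ∃ a : ℝ, 0 < a ∧ a ≤ 1 / 2 ∧ a < q :=
    ⟨min (1 / 2) (q / 2), by positivity, min_le_left _ _,
      (min_le_right _ _).trans_lt (by linarith)⟩
  have h : ellMoment p q ≤
      ENNReal.ofReal (betaFn (1 / 2) a) * ENNReal.ofReal (betaFn p (q - a)) := by
    rw [← lintegral_rpow_mul_one_sub_rpow hp (sub_pos.mpr haq),
      ← lintegral_const_mul' _ _ ENNReal.ofReal_ne_top]
    refine setLIntegral_mono' measurableSet_Ioo fun t ht => ?_
    have ht1 : 0 < 1 - t := by linarith [ht.2]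
    have ht0 := ht.1
    calc ENNReal.ofReal (t ^ (p - 1) * (1 - t) ^ (q - 1)) * ellK t
      _ ≤ ENNReal.ofReal (t ^ (p - 1) * (1 - t) ^ (q - 1)) *
          (ENNReal.ofReal ((1 - t) ^ (-a)) * ENNReal.ofReal (betaFn (1 / 2) a)) := by
        gcongr
        exact ellK_le ha ha' ht
      _ = _ := by
        rw [← mul_assoc, ← ENNReal.ofReal_mul (by positivity), mul_comm, mul_assoc,
          ← Real.rpow_add ht1]
        ring_nf
  exact ne_top_of_le_ne_top (ENNReal.mul_ne_top ENNReal.ofReal_ne_top ENNReal.ofReal_ne_top) h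

end Finiteness

section Substitution

lemma lintegral_Ioo_comp_mul_deriv {f f' : ℝ → ℝ} (hf : ContinuousOn f (Icc 0 1)) (h0 : f 0 = 0)
    (h1 : f 1 = 1) (hd : ∀ x ∈ Ioo (0 : ℝ) 1, HasDerivAt f (f' x) x)
    (hpos : ∀ x ∈ Ioo (0 : ℝ) 1, 0 < f' x) (u : ℝ → ℝ≥0∞) :
    ∫⁻ x in Ioo (0 : ℝ) 1, u x = ∫⁻ x in Ioo (0 : ℝ) 1, ENNReal.ofReal (f' x) * u (f x) := by
  have hmono : StrictMonoOn f (Icc 0 1) := by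
    refine strictMonoOn_of_deriv_pos (convex_Icc 0 1) hf fun x hx => ?_
    rw [interior_Icc] at hx
    rw [(hd x hx).deriv]
    exact hpos x hx
  have himage : f '' Ioo 0 1 = Ioo 0 1 := by
    refine Subset.antisymm ?_ ?_
    · rintro _ ⟨x, hx, rfl⟩
      have hx' := Ioo_subset_Icc_self hx
      exact ⟨h0 ▸ hmono (by simp) hx' hx.1, h1 ▸ hmono hx' (by simp) hx.2⟩
    · have := intermediate_value_Ioo zero_le_one hf
      rwa [h0, h1] at this
  conv_lhs => rw [← himage]
  exact lintegral_image_eq_lintegral_deriv_mul_of_monotoneOn measurableSet_Ioo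
    (fun x hx => (hd x hx).hasDerivWithinAt) (hmono.monotoneOn.mono Ioo_subset_Icc_self) u

lemma lintegral_Ioo_one_sub (u : ℝ → ℝ≥0∞) :
    ∫⁻ x in Ioo (0 : ℝ) 1, u (1 - x) = ∫⁻ x in Ioo (0 : ℝ) 1, u x := by
  have himage : (fun x : ℝ => 1 - x) '' Ioo 0 1 = Ioo 0 1 := by simp
  conv_rhs => rw [← himage]
  rw [lintegral_image_eq_lintegral_deriv_mul_of_antitoneOn (f' := fun _ => -1) measurableSet_Ioo
    (fun x _ => by simpa using ((hasDerivAt_id x).const_sub 1).hasDerivWithinAt)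
    (fun x _ y _ hxy => sub_le_sub_left hxy 1)]
  simp

lemma sq_mul_rpow_neg_half {a : ℝ} (ha : 0 < a) (b : ℝ) (hb : 0 ≤ b) :
    (a ^ 2 * b) ^ (-1 / 2 : ℝ) = a⁻¹ * b ^ (-1 / 2 : ℝ) := by
  rw [Real.mul_rpow (by positivity) hb, ← Real.rpow_natCast_mul ha.le, ← Real.rpow_neg_one]
  norm_num

lemma ellK_eq_lintegral_mul (t : ℝ) (ht : t ∈ Ioo (0 : ℝ) 1) :
    ellK t = ∫⁻ y in Ioo (0 : ℝ) 1,
      ENNReal.ofReal ((y * (1 - y) * (1 - t * y)) ^ (-1 / 2 : ℝ)) := by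
  refine setLIntegral_congr_fun measurableSet_Ioo fun y hy => ?_
  obtain ⟨ht0, ht1⟩ := ht
  obtain ⟨hy0, hy1⟩ := hy
  have h1 : 0 < 1 - y := by linarith
  have h3 : 0 < 1 - t * y := by nlinarith
  change ENNReal.ofReal _ = ENNReal.ofReal _
  rw [Real.mul_rpow (by positivity) h3.le, Real.mul_rpow hy0.le h1.le]

/-- **Landen's transformation** of the complete elliptic integral. -/
lemma ellK_landen {k : ℝ} (hk : k ∈ Ioo (0 : ℝ) 1) :
    ellK (4 * k / (1 + k) ^ 2) = ENNReal.ofReal (1 + k) * ellK (k ^ 2) := by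
  obtain ⟨hk0, hk1⟩ := hk
  have hx : 4 * k / (1 + k) ^ 2 ∈ Ioo (0 : ℝ) 1 := by
    refine ⟨by positivity, ?_⟩
    rw [div_lt_one (by positivity)]
    nlinarith [sq_pos_of_pos (sub_pos.mpr hk1)]
  have hk2 : k ^ 2 ∈ Ioo (0 : ℝ) 1 := ⟨by positivity, by nlinarith⟩
  rw [ellK_eq_lintegral_mul _ hx, ellK_eq_lintegral_mul _ hk2,
    ← lintegral_const_mul' _ _ ENNReal.ofReal_ne_top,
    lintegral_Ioo_comp_mul_deriv (f := fun y => (1 + k) ^ 2 * y / (1 + k * y) ^ 2)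
      (f' := fun y => (1 + k) ^ 2 * (1 - k * y) / (1 + k * y) ^ 3)]
  · refine setLIntegral_congr_fun measurableSet_Ioo fun y ⟨hy0, hy1⟩ => ?_
    have h1 : 0 < 1 - y := by linarith
    have h2 : 0 < 1 - k * y := by nlinarith
    have h3 : 0 < 1 - k ^ 2 * y := by nlinarith [hk2.2]
    have hs : (1 + k) ^ 2 * y / (1 + k * y) ^ 2 * (1 - (1 + k) ^ 2 * y / (1 + k * y) ^ 2) *
        (1 - 4 * k / (1 + k) ^ 2 * ((1 + k) ^ 2 * y / (1 + k * y) ^ 2)) =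
        ((1 + k) * (1 - k * y) / (1 + k * y) ^ 3) ^ 2 * (y * (1 - y) * (1 - k ^ 2 * y)) := by
      field_simp
      ring
    simp only [hs]
    rw [sq_mul_rpow_neg_half (by positivity) _ (by positivity),
      ← ENNReal.ofReal_mul (by positivity), ← ENNReal.ofReal_mul (by positivity)]
    congr 1
    field_simp
  · refine ContinuousOn.div (by fun_prop) (by fun_prop) fun y hy => ?_
    have := hy.1
    positivity
  · simp
  · simp only [mul_one]
    field_simp
  · intro y hy
    have hy0 := hy.1
    have hne : (1 + k * y) ^ 2 ≠ 0 := by positivity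
    have h := ((hasDerivAt_id y).const_mul ((1 + k) ^ 2)).div
      ((((hasDerivAt_id y).const_mul k).const_add 1).pow 2) hne
    refine h.congr_deriv ?_
    simp only [id, Pi.pow_apply]
    field_simp
    ring
  · intro y ⟨hy0, hy1⟩
    have h2 : 0 < 1 - k * y := by nlinarith
    positivity

lemma ellMoment_eq_lintegral_sq (p q : ℝ) :
    ellMoment p q = ∫⁻ k in Ioo (0 : ℝ) 1,
      ENNReal.ofReal (2 * k ^ (2 * p - 1) * (1 - k ^ 2) ^ (q - 1)) * ellK (k ^ 2) := by
  rw [ellMoment, lintegral_Ioo_comp_mul_deriv (f := fun k => k ^ 2) (f' := fun k => 2 * k)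
    (by fun_prop) (by simp) (by simp) (fun x _ => by simpa using hasDerivAt_pow 2 x)
    (fun x hx => by linarith [hx.1])]
  refine setLIntegral_congr_fun measurableSet_Ioo fun k ⟨hk0, hk1⟩ => ?_
  have h2 : 0 < 1 - k ^ 2 := by nlinarith
  rw [← mul_assoc, ← ENNReal.ofReal_mul (by positivity)]
  congr 2
  rw [← Real.rpow_natCast_mul hk0.le, show 2 * p - 1 = (2 : ℕ) * (p - 1) + 1 by push_cast; ring,
    Real.rpow_add_one hk0.ne']
  ring

lemma ellMoment_eq_lintegral_landen (a b : ℝ) :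
    ellMoment a b = ∫⁻ k in Ioo (0 : ℝ) 1,
      ENNReal.ofReal (4 ^ a * k ^ (a - 1) * (1 - k) ^ (2 * b - 1) * (1 + k) ^ (2 - 2 * a - 2 * b)) *
        ellK (k ^ 2) := by
  rw [ellMoment, lintegral_Ioo_comp_mul_deriv (f := fun k => 4 * k / (1 + k) ^ 2)
    (f' := fun k => 4 * (1 - k) / (1 + k) ^ 3)]
  · refine setLIntegral_congr_fun measurableSet_Ioo fun k hk => ?_
    rw [ellK_landen hk]
    obtain ⟨hk0, hk1⟩ := hk
    have h1 : 0 < 1 - k := by linarith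
    have h2 : 0 < 1 + k := by linarith
    have hs : 1 - 4 * k / (1 + k) ^ 2 = (1 - k) ^ 2 / (1 + k) ^ 2 := by
      field_simp
      ring
    have h4 : (0 : ℝ) < 4 := by norm_num
    rw [← mul_assoc, ← mul_assoc, hs, ← ENNReal.ofReal_mul (by positivity),
      ← ENNReal.ofReal_mul (by positivity)]
    congr 2
    generalize 1 - k = m at *
    generalize 1 + k = l at *
    generalize (4 : ℝ) = c at *
    obtain ⟨K, rfl⟩ : ∃ K, Real.exp K = k := ⟨_, Real.exp_log hk0⟩
    obtain ⟨M, rfl⟩ : ∃ M, Real.exp M = m := ⟨_, Real.exp_log h1⟩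
    obtain ⟨L, rfl⟩ : ∃ L, Real.exp L = l := ⟨_, Real.exp_log h2⟩
    obtain ⟨C, rfl⟩ : ∃ C, Real.exp C = c := ⟨_, Real.exp_log h4⟩
    simp only [← Real.exp_nat_mul, ← Real.exp_add, ← Real.exp_sub, ← Real.exp_mul]
    congr 1
    push_cast
    ring
  · refine ContinuousOn.div (by fun_prop) (by fun_prop) fun y hy => ?_
    have := hy.1
    positivity
  · simp
  · norm_num
  · intro k hk
    have hk0 := hk.1
    have hne : (1 + k) ^ 2 ≠ 0 := by positivity
    have h := ((hasDerivAt_id k).const_mul 4).div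
      (((hasDerivAt_id k).const_add 1).pow 2) hne
    refine h.congr_deriv ?_
    simp only [id, Pi.pow_apply]
    field_simp
    ring
  · intro k ⟨hk0, hk1⟩
    have : 0 < 1 - k := by linarith
    positivity

lemma ellMoment_landen_add {a : ℝ} :
    ellMoment a ((1 - a) / 2) = ENNReal.ofReal (4 ^ a / 2) *
      (ellMoment (a / 2) (1 - a) + ellMoment ((a + 1) / 2) (1 - a)) := by
  have hm := measurable_ellK
  rw [ellMoment_eq_lintegral_landen, ellMoment_eq_lintegral_sq, ellMoment_eq_lintegral_sq,
    ← lintegral_add_left (by fun_prop), ← lintegral_const_mul' _ _ ENNReal.ofReal_ne_top]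
  refine setLIntegral_congr_fun measurableSet_Ioo fun k ⟨hk0, hk1⟩ => ?_
  have h1 : 0 < 1 - k := by linarith
  have h2 : 0 < 1 + k := by linarith
  have h3 : 0 < 1 - k ^ 2 := by nlinarith
  rw [← add_mul, ← mul_assoc, ← ENNReal.ofReal_add (by positivity) (by positivity),
    ← ENNReal.ofReal_mul (by positivity)]
  congr 2
  rw [show 1 - k ^ 2 = (1 - k) * (1 + k) by ring, Real.mul_rpow h1.le h2.le,
    show 2 * ((1 - a) / 2) - 1 = -a by ring, show 2 - 2 * a - 2 * ((1 - a) / 2) = -a + 1 by ring,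
    show 2 * ((a + 1) / 2) - 1 = a - 1 + 1 by ring, show 2 * (a / 2) - 1 = a - 1 by ring,
    show 1 - a - 1 = -a by ring, Real.rpow_add_one h2.ne', Real.rpow_add_one hk0.ne']
  ring

lemma ellMoment_landen_sub {a : ℝ} :
    ellMoment a (1 - a / 2) + ENNReal.ofReal (4 ^ a / 2) * ellMoment ((a + 1) / 2) (1 - a) =
      ENNReal.ofReal (4 ^ a / 2) * ellMoment (a / 2) (1 - a) := by
  have hm := measurable_ellK
  rw [ellMoment_eq_lintegral_landen, ellMoment_eq_lintegral_sq, ellMoment_eq_lintegral_sq,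
    ← lintegral_const_mul' _ _ ENNReal.ofReal_ne_top,
    ← lintegral_const_mul' _ _ ENNReal.ofReal_ne_top, ← lintegral_add_left (by fun_prop)]
  refine setLIntegral_congr_fun measurableSet_Ioo fun k ⟨hk0, hk1⟩ => ?_
  have h1 : 0 < 1 - k := by linarith
  have h2 : 0 < 1 + k := by linarith
  have h3 : 0 < 1 - k ^ 2 := by nlinarith
  rw [← mul_assoc, ← mul_assoc, ← ENNReal.ofReal_mul (by positivity),
    ← ENNReal.ofReal_mul (by positivity), ← add_mul,
    ← ENNReal.ofReal_add (by positivity) (by positivity)]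
  congr 2
  rw [show 1 - k ^ 2 = (1 - k) * (1 + k) by ring, Real.mul_rpow h1.le h2.le,
    show 2 * (1 - a / 2) - 1 = -a + 1 by ring, show 2 - 2 * a - 2 * (1 - a / 2) = -a by ring,
    show 2 * ((a + 1) / 2) - 1 = a - 1 + 1 by ring, show 2 * (a / 2) - 1 = a - 1 by ring,
    show 1 - a - 1 = -a by ring, Real.rpow_add_one h1.ne', Real.rpow_add_one hk0.ne']
  ring

end Substitution

section Contour

open Complex

/-- A dominated holomorphic function on the right half plane has vanishing integral along
the imaginary axis. -/
lemma integral_imaginary_axis_eq_zero {f : ℂ → ℂ} {G : ℝ → ℝ} {S : Set ℝ} (hS : S.Finite)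
    (hf : DifferentiableOn ℂ f {z | 0 < z.re}) (hG : Integrable G)
    (hG0 : Tendsto G (cocompact ℝ) (𝓝 0))
    (hfG : ∀ t ∉ S, ∀ e : ℝ, 0 < e → ‖f (e + t * I)‖ ≤ G t)
    (hinf : ∀ t ∉ S, Tendsto (fun e : ℝ => f (e + t * I)) atTop (𝓝 0))
    (hzero : ∀ t ∉ S, Tendsto (fun e : ℝ => f (e + t * I)) (𝓝[>] 0) (𝓝 (f (t * I)))) :
    ∫ t : ℝ, f (t * I) = 0 := by
  have hae : ∀ᵐ t : ℝ, t ∉ S := hS.countable.ae_notMem volume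
  have hcont (e : ℝ) (he : 0 < e) : Continuous fun t : ℝ => f (e + t * I) := by
    refine hf.continuousOn.comp_continuous (by fun_prop) fun t => ?_
    simpa using he
  have hint (e : ℝ) (he : 0 < e) : Integrable fun t : ℝ => f (e + t * I) :=
    hG.mono' (hcont e he).aestronglyMeasurable (hae.mono fun t ht => hfG t ht e he)
  have hconst (a b : ℝ) (ha : 0 < a) (hb : 0 < b) :
      ∫ t : ℝ, f (a + t * I) = ∫ t : ℝ, f (b + t * I) := by
    have hside (s : ℝ) (hs : |s| = 1) :
        Tendsto (fun T : ℝ => ∫ x : ℝ in a..b, f (x + (s * T : ℝ) * I)) atTop (𝓝 0) := by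
      have hsT : Tendsto (fun T : ℝ => s * T) atTop (cocompact ℝ) := by
        refine tendsto_cocompact_of_tendsto_dist_comp_atTop 0 ?_
        simpa [abs_mul, hs] using tendsto_abs_atTop_atTop
      have hlim := (hG0.comp hsT).mul_const |b - a|
      rw [zero_mul] at hlim
      refine squeeze_zero_norm' ?_ hlim
      filter_upwards [hsT hS.isCompact.compl_mem_cocompact] with T hT
      refine intervalIntegral.norm_integral_le_of_norm_le_const fun x hx => ?_
      refine hfG _ hT x ?_
      rw [uIoc, mem_Ioc] at hx
      exact (lt_min ha hb).trans hx.1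
    have hrect (T : ℝ) : (∫ x : ℝ in a..b, f (x + ((-1) * T : ℝ) * I)) -
        (∫ x : ℝ in a..b, f (x + (1 * T : ℝ) * I)) +
        I • (∫ y : ℝ in (-T)..T, f (b + y * I)) - I • (∫ y : ℝ in (-T)..T, f (a + y * I)) = 0 := by
      have h := Complex.integral_boundary_rect_eq_zero_of_differentiableOn f
        (⟨a, -T⟩ : ℂ) ⟨b, T⟩ (hf.mono fun z hz => ?_)
      · simpa using h
      · have := (mem_reProdIm.mp hz).1
        rw [uIcc, mem_Icc] at this
        exact (lt_min ha hb).trans_le this.1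
    have hlim (e : ℝ) (he : 0 < e) := (intervalIntegral_tendsto_integral (hint e he)
      tendsto_neg_atTop_atBot tendsto_id).const_smul I
    have h := (((hside (-1) (by simp)).sub (hside 1 (by simp))).add (hlim b hb)).sub (hlim a ha)
    simp only [id] at h
    have h0 := tendsto_nhds_unique ((tendsto_congr hrect).mp h) tendsto_const_nhds
    rw [sub_zero, zero_add, sub_eq_zero, smul_right_inj I_ne_zero] at h0
    exact h0.symm
  have hone : ∫ t : ℝ, f ((1 : ℝ) + t * I) = 0 := by
    have h : Tendsto (fun e : ℝ => ∫ t : ℝ, f (e + t * I)) atTop (𝓝 (∫ _ : ℝ, (0 : ℂ))) := by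
      refine tendsto_integral_filter_of_dominated_convergence G ?_ ?_ hG ?_
      · filter_upwards [eventually_gt_atTop 0] with e he
        exact (hcont e he).aestronglyMeasurable
      · filter_upwards [eventually_gt_atTop 0] with e he
        exact hae.mono fun t ht => hfG t ht e he
      · exact hae.mono hinf
    rw [integral_zero] at h
    refine tendsto_nhds_unique ?_ h
    refine tendsto_const_nhds.congr' ?_
    filter_upwards [eventually_gt_atTop 0] with e he
    exact hconst 1 e one_pos he
  have h : Tendsto (fun e : ℝ => ∫ t : ℝ, f (e + t * I)) (𝓝[>] 0) (𝓝 (∫ t : ℝ, f (t * I))) := by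
    refine tendsto_integral_filter_of_dominated_convergence G ?_ ?_ hG ?_
    · filter_upwards [self_mem_nhdsWithin] with e he
      exact (hcont e he).aestronglyMeasurable
    · filter_upwards [self_mem_nhdsWithin] with e he
      exact hae.mono fun t ht => hfG t ht e he
    · exact hae.mono hzero
  refine tendsto_nhds_unique h (tendsto_const_nhds.congr' ?_)
  filter_upwards [self_mem_nhdsWithin] with e he
  rw [← hone]
  exact hconst 1 e one_pos he

lemma norm_add_mul_I_cpow_le {e s b : ℝ} (hs : s ≠ 0) (hb : b ≤ 0) :
    ‖((e : ℂ) + s * I) ^ (b : ℂ)‖ ≤ |s| ^ b := by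
  rw [norm_cpow_real]
  refine Real.rpow_le_rpow_of_nonpos (abs_pos.mpr hs) ?_ hb
  simpa using Complex.abs_im_le_norm (e + s * I)

lemma tendsto_add_mul_I_cpow_atTop {s b c : ℝ} (hb : b < 0) (hc : 0 < c) :
    Tendsto (fun e : ℝ => (((c * e : ℝ) : ℂ) + s * I) ^ (b : ℂ)) atTop (𝓝 0) := by
  rw [tendsto_zero_iff_norm_tendsto_zero]
  simp_rw [norm_cpow_real]
  have h : Tendsto (fun e : ℝ => ‖((c * e : ℝ) : ℂ) + s * I‖) atTop atTop := by
    refine tendsto_atTop_mono (fun e => ?_) (tendsto_id.const_mul_atTop hc)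
    simpa using Complex.re_le_norm (((c * e : ℝ) : ℂ) + s * I)
  simpa [Function.comp_def] using (tendsto_rpow_neg_atTop (neg_pos.mpr hb)).comp h

lemma tendsto_add_mul_I_cpow_zero {s b c : ℝ} (hs : s ≠ 0) :
    Tendsto (fun e : ℝ => (((c * e : ℝ) : ℂ) + s * I) ^ (b : ℂ)) (𝓝[>] 0)
      (𝓝 ((s * I) ^ (b : ℂ))) := by
  have h1 : (s * I : ℂ) ∈ slitPlane := by
    rw [mem_slitPlane_iff]
    right
    simpa using hs
  have h2 : ContinuousAt (fun e : ℝ => (((c * e : ℝ) : ℂ) + s * I) ^ (b : ℂ)) 0 := by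
    refine ContinuousAt.cpow (by fun_prop) (by fun_prop) (by simpa using h1)
  simpa using h2.tendsto.mono_left nhdsWithin_le_nhds

lemma mul_I_cpow_of_pos {s : ℝ} (hs : 0 < s) (b : ℝ) :
    ((s : ℂ) * I) ^ (b : ℂ) = ((|s| ^ b : ℝ) : ℂ) * exp ((Real.pi * b / 2 : ℝ) * I) := by
  rw [cpow_def_of_ne_zero (by simp [hs.ne']), log_ofReal_mul hs I_ne_zero, log_I, abs_of_pos hs,
    Real.rpow_def_of_pos hs, ofReal_exp, ← exp_add]
  push_cast
  ring_nf

lemma mul_I_cpow_of_neg {s : ℝ} (hs : s < 0) (b : ℝ) :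
    ((s : ℂ) * I) ^ (b : ℂ) = ((|s| ^ b : ℝ) : ℂ) * exp ((-(Real.pi * b / 2) : ℝ) * I) := by
  have h : (s : ℂ) * I = ((-s : ℝ) : ℂ) * (-I) := by push_cast; ring
  have hs' : 0 < -s := neg_pos.mpr hs
  rw [h, cpow_def_of_ne_zero (by simp [hs.ne]), log_ofReal_mul hs' (neg_ne_zero.mpr I_ne_zero),
    log_neg_I, abs_of_neg hs, Real.rpow_def_of_pos hs', ofReal_exp, ← exp_add]
  push_cast
  ring_nf

lemma tendsto_abs_one_sub_mul_rpow_cocompact {x b : ℝ} (hx : 0 < x) (hb : b < 0) :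
    Tendsto (fun t : ℝ => |1 - x * t| ^ b) (cocompact ℝ) (𝓝 0) := by
  have h : Tendsto (fun t : ℝ => |1 - x * t|) (cocompact ℝ) atTop := by
    refine tendsto_atTop_mono (f := fun t : ℝ => x * ‖t‖ - 1) (fun t => ?_)
      (tendsto_atTop_add_const_right _ _ (tendsto_norm_cocompact_atTop.const_mul_atTop hx))
    have := abs_sub_abs_le_abs_sub (x * t) 1
    rw [abs_mul, abs_of_pos hx, abs_one, abs_sub_comm] at this
    simpa using this
  simpa [Function.comp_def] using (tendsto_rpow_neg_atTop (neg_pos.mpr hb)).comp h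

lemma tendsto_abs_rpow_cocompact {b : ℝ} (hb : b < 0) :
    Tendsto (fun t : ℝ => |t| ^ b) (cocompact ℝ) (𝓝 0) := by
  simpa [Function.comp_def] using
    (tendsto_rpow_neg_atTop (neg_pos.mpr hb)).comp (tendsto_norm_cocompact_atTop (E := ℝ))

/-- The modulus of the integrand of the Euler integral for `ellMoment`, on the whole line. -/
noncomputable def eulerKernel (p q x t : ℝ) : ℝ :=
  |t| ^ (p - 1) * |1 - t| ^ (q - 1) * |1 - x * t| ^ (-1 / 2 : ℝ)

lemma integral_eulerKernel_branches_eq_zero {p q x : ℝ} (hp : p < 1) (hq : q < 1) (hx : 0 < x)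
    (hG : Integrable (eulerKernel p q x)) :
    ∫ t : ℝ, ((t * I : ℂ) ^ ((p - 1 : ℝ) : ℂ) * (((t - 1 : ℝ) : ℂ) * I) ^ ((q - 1 : ℝ) : ℂ) *
      (((x * t - 1 : ℝ) : ℂ) * I) ^ ((-1 / 2 : ℝ) : ℂ)) = 0 := by
  have hp' : p - 1 < 0 := by linarith
  have hq' : q - 1 < 0 := by linarith
  have hh : (-1 / 2 : ℝ) < 0 := by norm_num
  set f : ℂ → ℂ := fun w => w ^ ((p - 1 : ℝ) : ℂ) * (w - I) ^ ((q - 1 : ℝ) : ℂ) *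
    (x * w - I) ^ ((-1 / 2 : ℝ) : ℂ) with hf
  have hfe (e t : ℝ) : f (e + t * I) = (((1 * e : ℝ) : ℂ) + t * I) ^ ((p - 1 : ℝ) : ℂ) *
      (((1 * e : ℝ) : ℂ) + (t - 1 : ℝ) * I) ^ ((q - 1 : ℝ) : ℂ) *
      (((x * e : ℝ) : ℂ) + (x * t - 1 : ℝ) * I) ^ ((-1 / 2 : ℝ) : ℂ) := by
    simp only [hf]
    push_cast
    ring_nf
  have hf0 (t : ℝ) : f (t * I) = (t * I : ℂ) ^ ((p - 1 : ℝ) : ℂ) *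
      (((t - 1 : ℝ) : ℂ) * I) ^ ((q - 1 : ℝ) : ℂ) *
      (((x * t - 1 : ℝ) : ℂ) * I) ^ ((-1 / 2 : ℝ) : ℂ) := by
    simp only [hf]
    push_cast
    ring_nf
  have hS (t : ℝ) (ht : t ∉ ({0, 1, x⁻¹} : Set ℝ)) : t ≠ 0 ∧ t - 1 ≠ 0 ∧ x * t - 1 ≠ 0 := by
    simp only [mem_insert_iff, mem_singleton_iff, not_or] at ht
    refine ⟨ht.1, sub_ne_zero.mpr ht.2.1, fun h => ht.2.2 ?_⟩
    field_simp
    linarith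
  have h := integral_imaginary_axis_eq_zero (f := f) (G := eulerKernel p q x) (S := {0, 1, x⁻¹})
    (by simp) ?_ hG ?_ ?_ ?_ ?_
  · simpa only [hf0] using h
  · intro w hw
    have hw' : 0 < w.re := hw
    have h1 : w ∈ slitPlane := Or.inl hw'
    have h2 : w - I ∈ slitPlane := Or.inl (by simpa using hw')
    have h3 : x * w - I ∈ slitPlane := Or.inl (by simpa using mul_pos hx hw')
    refine DifferentiableAt.differentiableWithinAt ?_
    simp only [hf]
    fun_prop (disch := assumption)
  · have h := ((tendsto_abs_rpow_cocompact hp').mul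
      (tendsto_abs_one_sub_mul_rpow_cocompact one_pos hq')).mul
      (tendsto_abs_one_sub_mul_rpow_cocompact hx hh)
    simp only [one_mul, mul_zero] at h
    exact h
  · intro t ht e he
    obtain ⟨h1, h2, h3⟩ := hS t ht
    rw [hfe, norm_mul, norm_mul, eulerKernel, abs_sub_comm 1 t, abs_sub_comm 1 (x * t)]
    gcongr
    exacts [norm_add_mul_I_cpow_le h1 hp'.le, norm_add_mul_I_cpow_le h2 hq'.le,
      norm_add_mul_I_cpow_le h3 hh.le]
  · intro t ht
    simp_rw [hfe]
    have h := ((tendsto_add_mul_I_cpow_atTop (s := t) hp' one_pos).mul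
      (tendsto_add_mul_I_cpow_atTop (s := t - 1) hq' one_pos)).mul
      (tendsto_add_mul_I_cpow_atTop (s := x * t - 1) hh hx)
    rwa [mul_zero] at h
  · intro t ht
    obtain ⟨h1, h2, h3⟩ := hS t ht
    simp_rw [hfe, hf0]
    exact ((tendsto_add_mul_I_cpow_zero h1).mul (tendsto_add_mul_I_cpow_zero h2)).mul
      (tendsto_add_mul_I_cpow_zero h3)

lemma integral_eulerKernel_relation {p q r x : ℝ} (hp : p < 1) (hq : q < 1)
    (hpqr : p + q + r = 3 / 2) (hx : x ∈ Ioo (0 : ℝ) 1) (hG : Integrable (eulerKernel p q x)) :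
    Real.sin (Real.pi * p) * (∫ t in Ioo 0 1, eulerKernel p q x t) +
      Real.cos (Real.pi * r) * (∫ t in Ioo 1 x⁻¹, eulerKernel p q x t) =
      Real.sin (Real.pi * r) * ∫ t in Ioi x⁻¹, eulerKernel p q x t := by
  obtain ⟨hx0, hx1⟩ := hx
  have hxi : 1 < x⁻¹ := (one_lt_inv₀ hx0).mpr hx1
  set c : ℂ := exp ((Real.pi * (p + q - 5 / 2) / 2 : ℝ) * I) with hc
  set g : ℝ → ℂ := fun t => c * ((t * I : ℂ) ^ ((p - 1 : ℝ) : ℂ) *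
    (((t - 1 : ℝ) : ℂ) * I) ^ ((q - 1 : ℝ) : ℂ) *
    (((x * t - 1 : ℝ) : ℂ) * I) ^ ((-1 / 2 : ℝ) : ℂ)) with hg
  have hg0 : ∫ t, g t = 0 := by
    rw [hg, integral_const_mul, integral_eulerKernel_branches_eq_zero hp hq hx0 hG, mul_zero]
  have hphase (t φ : ℝ) (h : g t = (eulerKernel p q x t : ℂ) * exp (φ * I)) :
      (g t).im = Real.sin φ * eulerKernel p q x t := by
    rw [h, im_ofReal_mul, exp_ofReal_mul_I_im, mul_comm]
  have hker (t : ℝ) : (eulerKernel p q x t : ℂ) = ((|t| ^ (p - 1) : ℝ) : ℂ) *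
      ((|t - 1| ^ (q - 1) : ℝ) : ℂ) * ((|x * t - 1| ^ (-1 / 2 : ℝ) : ℝ) : ℂ) := by
    rw [eulerKernel, abs_sub_comm 1 t, abs_sub_comm 1 (x * t)]
    push_cast
    rfl
  have hcombine (a₁ a₂ a₃ : ℂ) (φ₁ φ₂ φ₃ φ : ℝ)
      (hφ : φ = Real.pi * (p + q - 5 / 2) / 2 + φ₁ + φ₂ + φ₃) :
      c * (a₁ * exp (φ₁ * I) * (a₂ * exp (φ₂ * I)) * (a₃ * exp (φ₃ * I))) =
      a₁ * a₂ * a₃ * exp (φ * I) := by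
    rw [hφ]
    push_cast
    simp only [hc, add_mul, exp_add]
    push_cast
    ring
  have h1 (t : ℝ) (ht : t < 0) : (g t).im = 0 := by
    rw [hphase t 0, Real.sin_zero, zero_mul]
    simp only [hg]
    rw [mul_I_cpow_of_neg ht, mul_I_cpow_of_neg (by linarith : t - 1 < 0),
      mul_I_cpow_of_neg (by nlinarith : x * t - 1 < 0), hker]
    exact hcombine _ _ _ _ _ _ _ (by ring)
  have h2 (t : ℝ) (ht : t ∈ Ioo 0 1) :
      (g t).im = -Real.sin (Real.pi * p) * eulerKernel p q x t := by
    rw [hphase t (Real.pi * p - Real.pi), Real.sin_sub_pi]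
    simp only [hg]
    rw [mul_I_cpow_of_pos ht.1, mul_I_cpow_of_neg (by linarith [ht.2] : t - 1 < 0),
      mul_I_cpow_of_neg (by nlinarith [ht.1, ht.2] : x * t - 1 < 0), hker]
    exact hcombine _ _ _ _ _ _ _ (by ring)
  have h3 (t : ℝ) (ht : t ∈ Ioo 1 x⁻¹) :
      (g t).im = -Real.cos (Real.pi * r) * eulerKernel p q x t := by
    have ht2 : x * t < 1 := by
      have := mul_lt_mul_of_pos_left ht.2 hx0
      rwa [mul_inv_cancel₀ hx0.ne'] at this
    rw [hphase t (-(Real.pi * r + Real.pi / 2)), Real.sin_neg, Real.sin_add_pi_div_two]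
    simp only [hg]
    rw [mul_I_cpow_of_pos (by linarith [ht.1]), mul_I_cpow_of_pos (by linarith [ht.1] : 0 < t - 1),
      mul_I_cpow_of_neg (by linarith : x * t - 1 < 0), hker]
    refine hcombine _ _ _ _ _ _ _ ?_
    rw [show r = 3 / 2 - p - q by linarith]
    ring
  have h4 (t : ℝ) (ht : t ∈ Ioi x⁻¹) :
      (g t).im = Real.sin (Real.pi * r) * eulerKernel p q x t := by
    have ht1 : x⁻¹ < t := ht
    have ht2 : 1 < x * t := by
      have := mul_lt_mul_of_pos_left ht1 hx0
      rwa [mul_inv_cancel₀ hx0.ne'] at this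
    rw [hphase t (-(Real.pi * r + Real.pi)), Real.sin_neg, Real.sin_add_pi, neg_neg]
    simp only [hg]
    rw [mul_I_cpow_of_pos (by linarith), mul_I_cpow_of_pos (by linarith : 0 < t - 1),
      mul_I_cpow_of_pos (by linarith : 0 < x * t - 1), hker]
    refine hcombine _ _ _ _ _ _ _ ?_
    rw [show r = 3 / 2 - p - q by linarith]
    ring
  have hae : ∀ᵐ t : ℝ, t ∉ ({0, 1, x⁻¹} : Set ℝ) :=
    (Set.toFinite {0, 1, x⁻¹}).countable.ae_notMem volume
  have him : (fun t => (g t).im) =ᵐ[volume] fun t =>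
      -Real.sin (Real.pi * p) * (Ioo 0 1).indicator (eulerKernel p q x) t +
      -Real.cos (Real.pi * r) * (Ioo 1 x⁻¹).indicator (eulerKernel p q x) t +
      Real.sin (Real.pi * r) * (Ioi x⁻¹).indicator (eulerKernel p q x) t := by
    filter_upwards [hae] with t ht
    simp only [mem_insert_iff, mem_singleton_iff, not_or] at ht
    obtain ⟨ht0, ht1, htx⟩ := ht
    simp only [indicator, mem_Ioo, mem_Ioi]
    rcases lt_or_gt_of_ne ht0 with h0 | h0
    · rw [h1 t h0, if_neg (by grind), if_neg (by grind), if_neg (by grind)]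
      simp
    rcases lt_or_gt_of_ne ht1 with h1' | h1'
    · rw [h2 t ⟨h0, h1'⟩, if_pos ⟨h0, h1'⟩, if_neg (by grind), if_neg (by grind)]
      simp
    rcases lt_or_gt_of_ne htx with hx' | hx'
    · rw [h3 t ⟨h1', hx'⟩, if_neg (by grind), if_pos ⟨h1', hx'⟩, if_neg (by grind)]
      simp
    · rw [h4 t hx', if_neg (by grind), if_neg (by grind), if_pos hx']
      simp
  have hgm : AEStronglyMeasurable g volume := by
    refine Measurable.aestronglyMeasurable ?_
    simp only [hg]
    fun_prop
  have hgint : Integrable g := by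
    refine hG.mono' hgm ?_
    filter_upwards [hae] with t ht
    simp only [mem_insert_iff, mem_singleton_iff, not_or] at ht
    simp only [hg, hc, norm_mul, norm_exp_ofReal_mul_I, one_mul, norm_cpow_real, norm_I, mul_one,
      norm_real, Real.norm_eq_abs, eulerKernel, abs_sub_comm (1 : ℝ)]
    exact le_rfl
  have hind (s : Set ℝ) (hs : MeasurableSet s) (a : ℝ) :
      Integrable fun t => a * s.indicator (eulerKernel p q x) t :=
    (hG.indicator hs).const_mul a
  have h12 := (hind (Ioo 0 1) measurableSet_Ioo (-Real.sin (Real.pi * p))).fun_add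
    (hind (Ioo 1 x⁻¹) measurableSet_Ioo (-Real.cos (Real.pi * r)))
  have h : ∫ t, (g t).im = 0 := by
    have := integral_im hgint
    rw [hg0] at this
    simpa using this
  rw [integral_congr_ae him, integral_add h12 (hind _ measurableSet_Ioi _),
    integral_add (hind _ measurableSet_Ioo _) (hind _ measurableSet_Ioo _), integral_const_mul,
    integral_const_mul, integral_const_mul, integral_indicator measurableSet_Ioo,
    integral_indicator measurableSet_Ioo, integral_indicator measurableSet_Ioi] at h
  linarith

end Contour

lemma lintegral_Ioo_eq_affine {a b : ℝ} (hab : a < b) (u : ℝ → ℝ≥0∞) :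
    ∫⁻ x in Ioo a b, u x = ENNReal.ofReal (b - a) * ∫⁻ y in Ioo (0 : ℝ) 1, u ((b - a) * y + a) := by
  have hba : 0 < b - a := sub_pos.mpr hab
  have himage : (fun y : ℝ => (b - a) * y + a) '' Ioo 0 1 = Ioo a b := by
    rw [image_affine_Ioo hba]
    simp
  rw [← himage, lintegral_image_eq_lintegral_abs_deriv_mul (f' := fun _ => b - a) measurableSet_Ioo
    (fun x _ => by
      simpa using (((hasDerivAt_id x).const_mul (b - a)).add_const a).hasDerivWithinAt)
    (fun x _ y _ h => by simpa [hba.ne'] using h), abs_of_pos hba,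
    lintegral_const_mul' _ _ ENNReal.ofReal_ne_top]

lemma lintegral_Ioi_one_eq_inv (u : ℝ → ℝ≥0∞) :
    ∫⁻ t in Ioi (1 : ℝ), u t = ∫⁻ y in Ioo (0 : ℝ) 1, ENNReal.ofReal (y ^ (-2 : ℝ)) * u y⁻¹ := by
  have himage : (fun y : ℝ => y⁻¹) '' Ioo 0 1 = Ioi 1 := by
    rw [image_inv_eq_inv, inv_Ioo_0_left one_pos, inv_one]
  rw [← himage, lintegral_image_eq_lintegral_abs_deriv_mul (f' := fun y => -(y ^ 2)⁻¹)
    measurableSet_Ioo (fun x hx => (hasDerivAt_inv hx.1.ne').hasDerivWithinAt)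
    (inv_injective.injOn)]
  refine setLIntegral_congr_fun measurableSet_Ioo fun y hy => ?_
  have hy0 := hy.1
  rw [abs_neg, abs_of_pos (by positivity), Real.rpow_neg hy0.le, Real.rpow_two]

lemma lintegral_Iio_zero_eq (u : ℝ → ℝ≥0∞) :
    ∫⁻ t in Iio (0 : ℝ), u t = ∫⁻ t in Ioi (1 : ℝ), u (1 - t) := by
  have himage : (fun t : ℝ => 1 - t) '' Ioi 1 = Iio 0 := by simp
  rw [← himage, lintegral_image_eq_lintegral_abs_deriv_mul (f' := fun _ => -1) measurableSet_Ioi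
    (fun x _ => by simpa using ((hasDerivAt_id x).const_sub 1).hasDerivWithinAt)
    (fun x _ y _ h => by simpa using h)]
  simp

/-- Inversion carries Beta-type weights on `(1, ∞)` to Beta weights on `(0, 1)`. -/
lemma lintegral_Ioi_one_beta {p q r : ℝ} (hpqr : p + q + r = 3 / 2) (h : ℝ → ℝ≥0∞) :
    ∫⁻ t in Ioi (1 : ℝ),
      ENNReal.ofReal (t ^ (p - 1) * (t - 1) ^ (q - 1) * t ^ (-1 / 2 : ℝ)) * h t⁻¹ =
    ∫⁻ u in Ioo (0 : ℝ) 1, ENNReal.ofReal (u ^ (r - 1) * (1 - u) ^ (q - 1)) * h u := by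
  rw [lintegral_Ioi_one_eq_inv]
  refine setLIntegral_congr_fun measurableSet_Ioo fun u ⟨hu0, hu1⟩ => ?_
  have h1 : 0 < 1 - u := sub_pos.mpr hu1
  rw [inv_inv, ← mul_assoc, ← ENNReal.ofReal_mul (by positivity)]
  congr 2
  rw [show u⁻¹ - 1 = (1 - u) * u⁻¹ by field_simp, Real.mul_rpow h1.le (by positivity),
    Real.inv_rpow hu0.le, Real.inv_rpow hu0.le, Real.inv_rpow hu0.le, ← Real.rpow_neg hu0.le,
    ← Real.rpow_neg hu0.le, ← Real.rpow_neg hu0.le,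
    show r - 1 = -2 + -(p - 1) + -(q - 1) + -(-1 / 2) by linarith, Real.rpow_add hu0,
    Real.rpow_add hu0, Real.rpow_add hu0]
  ring

/-- The modulus of the integrand of the double Euler integral for `ellMoment`, on the plane. -/
noncomputable def doubleEulerKernel (p q : ℝ) (z : ℝ × ℝ) : ℝ :=
  |z.1| ^ (-1 / 2 : ℝ) * |1 - z.1| ^ (-1 / 2 : ℝ) * eulerKernel p q z.1 z.2

lemma eulerKernel_nonneg (p q x t : ℝ) : 0 ≤ eulerKernel p q x t := by
  unfold eulerKernel
  positivity

lemma doubleEulerKernel_nonneg (p q : ℝ) (z : ℝ × ℝ) : 0 ≤ doubleEulerKernel p q z :=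
  mul_nonneg (by positivity) (eulerKernel_nonneg _ _ _ _)

lemma measurable_doubleEulerKernel (p q : ℝ) : Measurable (doubleEulerKernel p q) := by
  unfold doubleEulerKernel eulerKernel
  fun_prop

lemma lintegral_doubleEulerKernel_Ioo {p q t : ℝ} (ht : t ∈ Ioo (0 : ℝ) 1) :
    ∫⁻ x in Ioo (0 : ℝ) 1, ENNReal.ofReal (doubleEulerKernel p q (x, t)) =
      ENNReal.ofReal (t ^ (p - 1) * (1 - t) ^ (q - 1)) * ellK t := by
  obtain ⟨ht0, ht1⟩ := ht
  have h1 : 0 < 1 - t := sub_pos.mpr ht1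
  rw [ellK, ← lintegral_const_mul' _ _ ENNReal.ofReal_ne_top]
  refine setLIntegral_congr_fun measurableSet_Ioo fun x ⟨hx0, hx1⟩ => ?_
  have h2 : 0 < 1 - x := sub_pos.mpr hx1
  have h3 : 0 < 1 - t * x := by nlinarith
  rw [← ENNReal.ofReal_mul (by positivity)]
  simp only [doubleEulerKernel, eulerKernel]
  rw [abs_of_pos hx0, abs_of_pos h2, abs_of_pos ht0, abs_of_pos h1, mul_comm x t, abs_of_pos h3]
  ring_nf

lemma lintegral_doubleEulerKernel_Ioo_zero_inv {p q t : ℝ} (ht : 1 < t) :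
    ∫⁻ x in Ioo 0 t⁻¹, ENNReal.ofReal (doubleEulerKernel p q (x, t)) =
      ENNReal.ofReal (t ^ (p - 1) * (t - 1) ^ (q - 1) * t ^ (-1 / 2 : ℝ)) * ellK t⁻¹ := by
  have ht0 : 0 < t := one_pos.trans ht
  have hi : t⁻¹ < 1 := inv_lt_one_of_one_lt₀ ht
  have h1 : 0 < t - 1 := sub_pos.mpr ht
  rw [lintegral_Ioo_eq_affine (inv_pos.mpr ht0), ellK,
    ← lintegral_const_mul' _ _ ENNReal.ofReal_ne_top,
    ← lintegral_const_mul' _ _ ENNReal.ofReal_ne_top]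
  refine setLIntegral_congr_fun measurableSet_Ioo fun y ⟨hy0, hy1⟩ => ?_
  have h2 : 0 < 1 - y := sub_pos.mpr hy1
  have h3 : 0 < 1 - t⁻¹ * y := by nlinarith
  rw [← ENNReal.ofReal_mul (by simpa using ht0.le), ← ENNReal.ofReal_mul (by positivity)]
  simp only [doubleEulerKernel, eulerKernel, sub_zero, add_zero]
  rw [abs_of_pos (by positivity), abs_of_pos h3, abs_of_pos ht0, abs_sub_comm, abs_of_pos h1,
    show t⁻¹ * y * t = y by field_simp, abs_of_pos h2, Real.mul_rpow (by positivity) hy0.le]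
  congr 1
  have h4 : t⁻¹ * t⁻¹ ^ (-1 / 2 : ℝ) = t ^ (-1 / 2 : ℝ) := by
    rw [Real.inv_rpow ht0.le, ← Real.rpow_neg ht0.le, ← Real.rpow_neg_one, ← Real.rpow_add ht0]
    norm_num
  rw [← h4]
  ring

lemma lintegral_doubleEulerKernel_Ioo_inv_one {p q t : ℝ} (ht : 1 < t) :
    ∫⁻ x in Ioo t⁻¹ 1, ENNReal.ofReal (doubleEulerKernel p q (x, t)) =
      ENNReal.ofReal (t ^ (p - 1) * (t - 1) ^ (q - 1) * t ^ (-1 / 2 : ℝ)) * ellK (1 - t⁻¹) := by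
  have ht0 : 0 < t := one_pos.trans ht
  have hti : 0 < t⁻¹ := inv_pos.mpr ht0
  have hi : t⁻¹ < 1 := inv_lt_one_of_one_lt₀ ht
  have h1 : 0 < t - 1 := sub_pos.mpr ht
  have h1' : 0 < 1 - t⁻¹ := sub_pos.mpr hi
  rw [lintegral_Ioo_eq_affine hi, ← lintegral_Ioo_one_sub, ellK,
    ← lintegral_const_mul' _ _ ENNReal.ofReal_ne_top,
    ← lintegral_const_mul' _ _ ENNReal.ofReal_ne_top]
  refine setLIntegral_congr_fun measurableSet_Ioo fun y ⟨hy0, hy1⟩ => ?_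
  have h2 : 0 < 1 - y := sub_pos.mpr hy1
  have h3 : 0 < 1 - (1 - t⁻¹) * y := by nlinarith
  rw [← ENNReal.ofReal_mul h1'.le, ← ENNReal.ofReal_mul (by positivity)]
  simp only [doubleEulerKernel, eulerKernel]
  rw [show (1 - t⁻¹) * (1 - y) + t⁻¹ = 1 - (1 - t⁻¹) * y by ring, sub_sub_cancel, abs_of_pos h3,
    abs_of_pos (mul_pos h1' hy0), abs_of_pos ht0, abs_sub_comm, abs_of_pos h1, abs_sub_comm,
    show (1 - (1 - t⁻¹) * y) * t - 1 = (1 - t⁻¹) * t * (1 - y) by field_simp; ring,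
    abs_of_pos (by positivity), Real.mul_rpow h1'.le hy0.le, Real.mul_rpow (by positivity) h2.le,
    Real.mul_rpow h1'.le ht0.le]
  congr 1
  have h4 : (1 - t⁻¹) * ((1 - t⁻¹) ^ (-1 / 2 : ℝ) * (1 - t⁻¹) ^ (-1 / 2 : ℝ)) = 1 := by
    rw [← Real.rpow_add h1']
    norm_num
    rw [Real.rpow_neg_one, mul_inv_cancel₀ h1'.ne']
  linear_combination (t ^ (p - 1) * (t - 1) ^ (q - 1) * t ^ (-1 / 2 : ℝ) *
    (y ^ (-1 / 2 : ℝ) * (1 - y) ^ (-1 / 2 : ℝ) * (1 - (1 - t⁻¹) * y) ^ (-1 / 2 : ℝ))) * h4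

lemma lintegral_indicator_sections {S : Set (ℝ × ℝ)} {C : Set ℝ} {D : ℝ → Set ℝ}
    (hC : MeasurableSet C) (hD : ∀ t, MeasurableSet (D t))
    (hS : ∀ x t, (x, t) ∈ S ↔ t ∈ C ∧ x ∈ D t) (f : ℝ × ℝ → ℝ≥0∞) :
    ∫⁻ t, ∫⁻ x, S.indicator f (x, t) = ∫⁻ t in C, ∫⁻ x in D t, f (x, t) := by
  rw [← lintegral_indicator hC]
  refine lintegral_congr fun t => ?_
  by_cases ht : t ∈ C
  · rw [indicator_of_mem ht, ← lintegral_indicator (hD t)]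
    refine lintegral_congr fun x => ?_
    by_cases hx : x ∈ D t
    · rw [indicator_of_mem ((hS x t).mpr ⟨ht, hx⟩), indicator_of_mem hx]
    · rw [indicator_of_notMem fun h => hx ((hS x t).mp h).2, indicator_of_notMem hx]
  · simp [indicator, hS, ht]

/-- Fubini for a nonnegative function whose iterated integral is finite. -/
lemma integrable_and_integral_of_lintegral {F : ℝ × ℝ → ℝ} (hF : Measurable F) (hF0 : ∀ z, 0 ≤ F z)
    {M : ℝ≥0∞} (hM : M ≠ ∞) (h : ∫⁻ t, ∫⁻ x, ENNReal.ofReal (F (x, t)) = M) :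
    Integrable F ∧ ∫ x, ∫ t, F (x, t) = M.toReal := by
  have hlint : ∫⁻ z, ENNReal.ofReal (F z) = M := by
    rw [← h, Measure.volume_eq_prod, lintegral_prod_symm' _ (by fun_prop)]
  have hint : Integrable F := by
    refine ⟨hF.aestronglyMeasurable, ?_⟩
    rw [hasFiniteIntegral_iff_ofReal (.of_forall hF0), hlint]
    exact hM.lt_top
  refine ⟨hint, ?_⟩
  rw [← hlint, ← integral_eq_lintegral_of_nonneg_ae (.of_forall hF0) hF.aestronglyMeasurable,
    Measure.volume_eq_prod, integral_prod _ hint]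

lemma ofReal_indicator (S : Set (ℝ × ℝ)) (F : ℝ × ℝ → ℝ) (z : ℝ × ℝ) :
    ENNReal.ofReal (S.indicator F z) = S.indicator (fun z => ENNReal.ofReal (F z)) z := by
  by_cases hz : z ∈ S <;> simp [hz]

lemma integral_doubleEulerKernel_of_sections {p q : ℝ} {S : Set (ℝ × ℝ)} {C : Set ℝ}
    {D : ℝ → Set ℝ} (hSm : MeasurableSet S) (hC : MeasurableSet C) (hD : ∀ t, MeasurableSet (D t))
    (hS : ∀ x t, (x, t) ∈ S ↔ t ∈ C ∧ x ∈ D t) {k : ℝ → ℝ≥0∞} {M : ℝ≥0∞} (hM : M ≠ ∞)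
    (hinner : ∀ t ∈ C, ∫⁻ x in D t, ENNReal.ofReal (doubleEulerKernel p q (x, t)) = k t)
    (houter : ∫⁻ t in C, k t = M) :
    Integrable (S.indicator (doubleEulerKernel p q)) ∧
      ∫ x, ∫ t, S.indicator (doubleEulerKernel p q) (x, t) = M.toReal := by
  refine integrable_and_integral_of_lintegral ((measurable_doubleEulerKernel p q).indicator hSm)
    (fun z => indicator_nonneg (fun z _ => doubleEulerKernel_nonneg p q z) z) hM ?_
  simp_rw [ofReal_indicator]
  rw [lintegral_indicator_sections hC hD hS, ← houter]
  exact setLIntegral_congr_fun hC hinner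

/-- The part of the strip `0 < x < 1` where `0 < t < 1`. -/
def lowerRegion : Set (ℝ × ℝ) := {z | z.1 ∈ Ioo 0 1 ∧ z.2 ∈ Ioo 0 1}

/-- The part of the strip `0 < x < 1` where `1 < t < x⁻¹`. -/
def middleRegion : Set (ℝ × ℝ) := {z | z.1 ∈ Ioo 0 1 ∧ z.2 ∈ Ioo 1 z.1⁻¹}

/-- The part of the strip `0 < x < 1` where `x⁻¹ < t`. -/
def upperRegion : Set (ℝ × ℝ) := {z | z.1 ∈ Ioo 0 1 ∧ z.2 ∈ Ioi z.1⁻¹}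

lemma integral_lowerRegion {p q : ℝ} (hp : 0 < p) (hq : 0 < q) :
    Integrable (lowerRegion.indicator (doubleEulerKernel p q)) ∧
      ∫ x, ∫ t, lowerRegion.indicator (doubleEulerKernel p q) (x, t) =
        (ellMoment p q).toReal := by
  refine integral_doubleEulerKernel_of_sections (C := Ioo 0 1) (D := fun _ => Ioo 0 1) ?_
    measurableSet_Ioo (fun _ => measurableSet_Ioo)
    (fun x t => by simp only [lowerRegion, mem_ofPred_eq, and_comm]) (ellMoment_ne_top hp hq)
    (fun t ht => lintegral_doubleEulerKernel_Ioo ht) rfl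
  exact (measurableSet_Ioo.preimage measurable_fst).inter (measurableSet_Ioo.preimage measurable_snd)

lemma integral_middleRegion {p q r : ℝ} (hr : 0 < r) (hq : 0 < q) (hpqr : p + q + r = 3 / 2) :
    Integrable (middleRegion.indicator (doubleEulerKernel p q)) ∧
      ∫ x, ∫ t, middleRegion.indicator (doubleEulerKernel p q) (x, t) =
        (ellMoment r q).toReal := by
  refine integral_doubleEulerKernel_of_sections (C := Ioi 1) (D := fun t => Ioo 0 t⁻¹) ?_
    measurableSet_Ioi (fun _ => measurableSet_Ioo) (fun x t => ?_)
    (ellMoment_ne_top hr hq) (fun t ht => lintegral_doubleEulerKernel_Ioo_zero_inv ht)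
    (lintegral_Ioi_one_beta hpqr ellK)
  · exact (measurableSet_Ioo.preimage measurable_fst).inter
      ((measurableSet_lt measurable_const measurable_snd).inter
        (measurableSet_lt measurable_snd measurable_fst.inv))
  · simp only [middleRegion, mem_ofPred_eq, mem_Ioo, mem_Ioi]
    constructor
    · rintro ⟨⟨hx0, hx1⟩, ht1, htx⟩
      exact ⟨ht1, hx0, (lt_inv_comm₀ hx0 (one_pos.trans ht1)).mpr htx⟩
    · rintro ⟨ht1, hx0, hxt⟩
      exact ⟨⟨hx0, hxt.trans (inv_lt_one_of_one_lt₀ ht1)⟩, ht1,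
        (lt_inv_comm₀ hx0 (one_pos.trans ht1)).mp hxt⟩

lemma integral_upperRegion {p q r : ℝ} (hr : 0 < r) (hq : 0 < q) (hpqr : p + q + r = 3 / 2) :
    Integrable (upperRegion.indicator (doubleEulerKernel p q)) ∧
      ∫ x, ∫ t, upperRegion.indicator (doubleEulerKernel p q) (x, t) =
        (ellMoment q r).toReal := by
  refine integral_doubleEulerKernel_of_sections (C := Ioi 1) (D := fun t => Ioo t⁻¹ 1) ?_
    measurableSet_Ioi (fun _ => measurableSet_Ioo) (fun x t => ?_)
    (ellMoment_ne_top hq hr) (fun t ht => lintegral_doubleEulerKernel_Ioo_inv_one ht) ?_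
  · exact (measurableSet_Ioo.preimage measurable_fst).inter
      (measurableSet_lt measurable_fst.inv measurable_snd)
  · simp only [upperRegion, mem_ofPred_eq, mem_Ioo, mem_Ioi]
    constructor
    · rintro ⟨⟨hx0, hx1⟩, hxt⟩
      have ht : 1 < t := ((one_lt_inv₀ hx0).mpr hx1).trans hxt
      exact ⟨ht, (inv_lt_comm₀ hx0 (one_pos.trans ht)).mp hxt, hx1⟩
    · rintro ⟨ht1, htx, hx1⟩
      have hx0 : 0 < x := (inv_pos.mpr (one_pos.trans ht1)).trans htx
      exact ⟨⟨hx0, hx1⟩, (inv_lt_comm₀ hx0 (one_pos.trans ht1)).mpr htx⟩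
  · rw [lintegral_Ioi_one_beta hpqr (fun u => ellK (1 - u)), ellMoment, ← lintegral_Ioo_one_sub]
    simp only [sub_sub_cancel, mul_comm]

lemma integrableOn_eulerKernel_Iio {p q r x : ℝ} (hp : 0 < p) (hr : 0 < r)
    (hpqr : p + q + r = 3 / 2) (hx : x ∈ Ioo (0 : ℝ) 1) :
    IntegrableOn (eulerKernel p q x) (Iio 0) := by
  obtain ⟨hx0, hx1⟩ := hx
  have hm : Measurable (eulerKernel p q x) := by
    unfold eulerKernel
    fun_prop
  refine ⟨hm.aestronglyMeasurable, ?_⟩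
  rw [hasFiniteIntegral_iff_ofReal (.of_forall fun t => eulerKernel_nonneg p q x t),
    lintegral_Iio_zero_eq]
  calc ∫⁻ t in Ioi (1 : ℝ), ENNReal.ofReal (eulerKernel p q x (1 - t))
      ≤ ∫⁻ t in Ioi (1 : ℝ), ENNReal.ofReal (x ^ (-1 / 2 : ℝ)) *
        (ENNReal.ofReal (t ^ (q - 1) * (t - 1) ^ (p - 1) * t ^ (-1 / 2 : ℝ)) * 1) := by
        refine setLIntegral_mono' measurableSet_Ioi fun t ht => ?_
        have ht1 : 1 < t := ht
        have ht0 : 0 < t := one_pos.trans ht1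
        have h1 : 0 < t - 1 := sub_pos.mpr ht1
        have h2 : x * t ≤ 1 - x * (1 - t) := by linarith
        rw [mul_one, ← ENNReal.ofReal_mul (by positivity)]
        refine ENNReal.ofReal_le_ofReal ?_
        rw [eulerKernel, sub_sub_cancel, abs_sub_comm, abs_of_pos h1, abs_of_pos ht0,
          abs_of_pos ((mul_pos hx0 ht0).trans_le h2)]
        calc (t - 1) ^ (p - 1) * t ^ (q - 1) * (1 - x * (1 - t)) ^ (-1 / 2 : ℝ)
            ≤ (t - 1) ^ (p - 1) * t ^ (q - 1) * (x * t) ^ (-1 / 2 : ℝ) :=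
              mul_le_mul_of_nonneg_left
                (Real.rpow_le_rpow_of_nonpos (by positivity) h2 (by norm_num)) (by positivity)
          _ = x ^ (-1 / 2 : ℝ) * (t ^ (q - 1) * (t - 1) ^ (p - 1) * t ^ (-1 / 2 : ℝ)) := by
              rw [Real.mul_rpow hx0.le ht0.le]
              ring
    _ = ENNReal.ofReal (x ^ (-1 / 2 : ℝ)) * ENNReal.ofReal (betaFn r p) := by
        rw [lintegral_const_mul' _ _ ENNReal.ofReal_ne_top,
          lintegral_Ioi_one_beta (r := r) (by linarith) (fun _ => 1)]
        simp only [mul_one]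
        rw [lintegral_rpow_mul_one_sub_rpow hr hp]
    _ < ∞ := by finiteness

/-- The three-term relation between Beta moments of the complete elliptic integral. -/
lemma ellMoment_relation {p q r : ℝ} (hp : p ∈ Ioo (0 : ℝ) 1) (hq : q ∈ Ioo (0 : ℝ) 1)
    (hr : 0 < r) (hpqr : p + q + r = 3 / 2) :
    Real.sin (Real.pi * p) * (ellMoment p q).toReal +
      Real.cos (Real.pi * r) * (ellMoment r q).toReal =
      Real.sin (Real.pi * r) * (ellMoment q r).toReal := by
  obtain ⟨hi1, he1⟩ := integral_lowerRegion hp.1 hq.1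
  obtain ⟨hi2, he2⟩ := integral_middleRegion hr hq.1 hpqr
  obtain ⟨hi3, he3⟩ := integral_upperRegion hr hq.1 hpqr
  rw [Measure.volume_eq_prod] at hi1 hi2 hi3
  have hae : ∀ᵐ x : ℝ,
      Real.sin (Real.pi * p) * (∫ t, lowerRegion.indicator (doubleEulerKernel p q) (x, t)) +
        Real.cos (Real.pi * r) * (∫ t, middleRegion.indicator (doubleEulerKernel p q) (x, t)) =
        Real.sin (Real.pi * r) * ∫ t, upperRegion.indicator (doubleEulerKernel p q) (x, t) := by
    filter_upwards [hi1.prod_right_ae, hi2.prod_right_ae, hi3.prod_right_ae] with x h1 h2 h3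
    by_cases hx : x ∈ Ioo (0 : ℝ) 1
    swap
    · simp [indicator, lowerRegion, middleRegion, upperRegion, -mem_Ioo, hx]
    set W : ℝ := |x| ^ (-1 / 2 : ℝ) * |1 - x| ^ (-1 / 2 : ℝ) with hW
    have hW0 : W ≠ 0 := by
      have h1 := abs_pos.mpr hx.1.ne'
      have h2 := abs_pos.mpr (sub_pos.mpr hx.2).ne'
      positivity
    have hsec {S : Set (ℝ × ℝ)} {B : Set ℝ} (hB : ∀ t, (x, t) ∈ S ↔ t ∈ B) :
        (fun t => S.indicator (doubleEulerKernel p q) (x, t)) =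
          fun t => W * B.indicator (eulerKernel p q x) t := by
      funext t
      by_cases ht : t ∈ B
      · rw [indicator_of_mem ht, indicator_of_mem ((hB t).mpr ht), doubleEulerKernel]
      · rw [indicator_of_notMem ht, indicator_of_notMem (mt (hB t).mp ht), mul_zero]
    have hs1 := hsec (S := lowerRegion) (B := Ioo 0 1) fun t => ⟨And.right, And.intro hx⟩
    have hs2 := hsec (S := middleRegion) (B := Ioo 1 x⁻¹) fun t => ⟨And.right, And.intro hx⟩
    have hs3 := hsec (S := upperRegion) (B := Ioi x⁻¹) fun t => ⟨And.right, And.intro hx⟩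
    rw [hs1, integrable_const_mul_iff hW0.isUnit, integrable_indicator_iff measurableSet_Ioo] at h1
    rw [hs2, integrable_const_mul_iff hW0.isUnit, integrable_indicator_iff measurableSet_Ioo] at h2
    rw [hs3, integrable_const_mul_iff hW0.isUnit, integrable_indicator_iff measurableSet_Ioi] at h3
    have hG : Integrable (eulerKernel p q x) := by
      have h0 := integrableOn_eulerKernel_Iio hp.1 hr hpqr hx
      have hz : IntegrableOn (eulerKernel p q x) {0, 1, x⁻¹} :=
        .of_measure_zero ((Set.toFinite _).measure_zero volume)
      rw [← integrableOn_univ]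
      refine ((((h0.union h1).union h2).union h3).union hz).mono_set fun t _ => ?_
      simp only [mem_union, mem_Iio, mem_Ioo, mem_Ioi, mem_insert_iff, mem_singleton_iff]
      grind
    rw [hs1, hs2, hs3, integral_const_mul, integral_const_mul, integral_const_mul,
      integral_indicator measurableSet_Ioo, integral_indicator measurableSet_Ioo,
      integral_indicator measurableSet_Ioi]
    linear_combination W * integral_eulerKernel_relation hp.2 hq.2 hpqr hx hG
  have h := integral_congr_ae hae
  rwa [integral_add (hi1.integral_prod_left.const_mul _) (hi2.integral_prod_left.const_mul _),
    integral_const_mul, integral_const_mul, integral_const_mul, he1, he2, he3] at h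

lemma Fval_eq_ellMoment {r s : ℚ} (hr : 0 < r) (hrs : r < s) :
    Fval r s = 2 ^ (1 - 4 * (r : ℝ)) / (2 * r.den) * (ellMoment r (s - r)).toReal / Real.pi := by
  have hr' : (0 : ℝ) < r := by exact_mod_cast hr
  have hrs' : (0 : ℝ) < s - r := sub_pos.mpr (by exact_mod_cast hrs)
  have hpi := Real.pi_ne_zero
  rw [ellMoment_toReal hr' hrs', Fval, add_sub_cancel]
  field_simp

lemma cos_pi_div_twelve_eq :
    Real.cos (Real.pi / 12) = (2 + √3) * Real.sin (Real.pi / 12) := by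
  have hs := Real.sin_two_mul (Real.pi / 12)
  have hc := Real.cos_two_mul (Real.pi / 12)
  rw [show 2 * (Real.pi / 12) = Real.pi / 6 by ring] at hs hc
  rw [Real.sin_pi_div_six] at hs
  rw [Real.cos_pi_div_six] at hc
  have h0 : 0 < Real.cos (Real.pi / 12) :=
    Real.cos_pos_of_mem_Ioo ⟨by linarith [Real.pi_pos], by linarith [Real.pi_pos]⟩
  refine mul_left_cancel₀ h0.ne' ?_
  linear_combination -hc / 2 + (2 + √3) / 2 * hs

lemma ellMoment_twelfths :
    (ellMoment (1 / 12) (5 / 6)).toReal = 4 ^ (5 / 6 : ℝ) / 2 *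
      (2 * (ellMoment (5 / 12) (1 / 6)).toReal - √3 * (ellMoment (11 / 12) (1 / 6)).toReal) ∧
    (ellMoment (7 / 12) (5 / 6)).toReal = 4 ^ (5 / 6 : ℝ) / 2 *
      (2 * (ellMoment (11 / 12) (1 / 6)).toReal - √3 * (ellMoment (5 / 12) (1 / 6)).toReal) := by
  have hadd := congrArg ENNReal.toReal (ellMoment_landen_add (a := 5 / 6))
  have hsub := congrArg ENNReal.toReal (ellMoment_landen_sub (a := 5 / 6))
  have h1 := ellMoment_relation (p := 1 / 12) (q := 5 / 6) (r := 7 / 12) (by norm_num)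
    (by norm_num) (by norm_num) (by norm_num)
  have h2 := ellMoment_relation (p := 7 / 12) (q := 5 / 6) (r := 1 / 12) (by norm_num)
    (by norm_num) (by norm_num) (by norm_num)
  norm_num at hadd hsub
  have hB := ellMoment_ne_top (p := 11 / 12) (q := 1 / 6) (by norm_num) (by norm_num)
  have hC := ellMoment_ne_top (p := 5 / 12) (q := 1 / 6) (by norm_num) (by norm_num)
  have hE := ellMoment_ne_top (p := 5 / 6) (q := 7 / 12) (by norm_num) (by norm_num)
  have hκ : (0 : ℝ) ≤ 4 ^ (5 / 6 : ℝ) / 2 := by positivity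
  rw [ENNReal.toReal_add hC hB, ENNReal.toReal_ofReal hκ] at hadd
  rw [ENNReal.toReal_add hE (ENNReal.mul_ne_top ENNReal.ofReal_ne_top hB), ENNReal.toReal_mul,
    ENNReal.toReal_ofReal hκ] at hsub
  have hs0 : Real.sin (Real.pi / 12) ≠ 0 :=
    (Real.sin_pos_of_pos_of_lt_pi (by positivity) (by linarith [Real.pi_pos])).ne'
  have h3 : √3 * √3 = 3 := Real.mul_self_sqrt (by norm_num)
  rw [show Real.pi * (7 / 12) = Real.pi / 12 + Real.pi / 2 by ring,
    show Real.pi * (1 / 12) = Real.pi / 12 by ring, Real.sin_add_pi_div_two,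
    cos_pi_div_twelve_eq] at h1 h2
  rw [Real.cos_add_pi_div_two] at h1
  have h1' : (ellMoment (1 / 12) (5 / 6)).toReal - (ellMoment (7 / 12) (5 / 6)).toReal =
      (2 + √3) * (ellMoment (5 / 6) (7 / 12)).toReal :=
    mul_left_cancel₀ hs0 (by linear_combination h1)
  have h2' : (ellMoment (1 / 12) (5 / 6)).toReal + (ellMoment (7 / 12) (5 / 6)).toReal =
      (2 - √3) * (ellMoment (5 / 6) (1 / 12)).toReal :=
    mul_left_cancel₀ hs0 (by
      linear_combination (2 - √3) * h2 + Real.sin (Real.pi / 12) *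
        ((ellMoment (1 / 12) (5 / 6)).toReal + (ellMoment (7 / 12) (5 / 6)).toReal) * h3)
  constructor
  · linear_combination (h1' + h2') / 2 + (2 + √3) / 2 * hsub + (2 - √3) / 2 * hadd
  · linear_combination (h2' - h1') / 2 - (2 + √3) / 2 * hsub + (2 - √3) / 2 * hadd

lemma Fval_relations :
    Fval (1 / 12) (11 / 12) = 2 * Fval (5 / 12) (7 / 12) - 2 * √3 * Fval (7 / 12) (17 / 12) ∧
    16 * Fval (11 / 12) (13 / 12) =
      2 * Fval (7 / 12) (17 / 12) + 2 * √3 * Fval (5 / 12) (7 / 12) := by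
  obtain ⟨hA, hD⟩ := ellMoment_twelfths
  have hy : ((2 : ℝ) ^ (1 / 3 : ℝ)) ^ 3 = 2 := by
    rw [← Real.rpow_mul_natCast (by norm_num)]
    norm_num
  have h3 : √3 * √3 = 3 := Real.mul_self_sqrt (by norm_num)
  have h4 : (4 : ℝ) ^ (5 / 6 : ℝ) = 2 * (2 ^ (1 / 3 : ℝ)) ^ 2 := by
    rw [show (4 : ℝ) = 2 ^ (2 : ℝ) by norm_num, ← Real.rpow_mul (by norm_num),
      ← Real.rpow_mul_natCast (by norm_num), ← Real.rpow_one_add' (by norm_num) (by norm_num)]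
    norm_num
  have e1 : (2 : ℝ) ^ (2 / 3 : ℝ) = (2 ^ (1 / 3 : ℝ)) ^ 2 := by
    rw [← Real.rpow_mul_natCast (by norm_num)]
    norm_num
  have e2 : (2 : ℝ) ^ (-(8 / 3) : ℝ) = 2 ^ (1 / 3 : ℝ) / 8 := by
    rw [show (-(8 / 3) : ℝ) = 1 / 3 - 3 by norm_num, Real.rpow_sub two_pos]
    norm_num
  have e3 : (2 : ℝ) ^ (-(2 / 3) : ℝ) = 2 ^ (1 / 3 : ℝ) / 2 := by
    rw [show (-(2 / 3) : ℝ) = 1 / 3 - 1 by norm_num, Real.rpow_sub two_pos]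
    norm_num
  have e4 : (2 : ℝ) ^ (-(4 / 3) : ℝ) = (2 ^ (1 / 3 : ℝ)) ^ 2 / 4 := by
    rw [← e1, show (-(4 / 3) : ℝ) = 2 / 3 - 2 by norm_num, Real.rpow_sub two_pos]
    norm_num
  have d1 : (1 / 12 : ℚ).den = 12 := by norm_num
  have d2 : (11 / 12 : ℚ).den = 12 := by norm_num
  have d3 : (5 / 12 : ℚ).den = 12 := by norm_num
  have d4 : (7 / 12 : ℚ).den = 12 := by norm_num
  rw [Fval_eq_ellMoment (r := 1 / 12) (by norm_num) (by norm_num),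
    Fval_eq_ellMoment (r := 11 / 12) (by norm_num) (by norm_num),
    Fval_eq_ellMoment (r := 5 / 12) (by norm_num) (by norm_num),
    Fval_eq_ellMoment (r := 7 / 12) (by norm_num) (by norm_num), d1, d2, d3, d4]
  norm_num
  rw [hA, hD, h4, e1, e2, e3, e4]
  set y : ℝ := 2 ^ (1 / 3 : ℝ)
  set B := (ellMoment (11 / 12) (1 / 6)).toReal
  set C := (ellMoment (5 / 12) (1 / 6)).toReal
  constructor
  · linear_combination y * C / (48 * Real.pi) * hy - y ^ 4 * C / (48 * Real.pi) * h3
  · linear_combination -y * (B - √3 / 2 * C) / (24 * Real.pi) * hy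

end EllipticMoments

open Complex in
/-- Assuming F(5/12,7/12)/F(7/12,17/12) ∉ ℚ(√3):
F(1/12,11/12) + 16i·F(11/12,13/12) = ζ₃²·(−4·F(5/12,7/12) − 4i·F(7/12,17/12)),
where ζ₃ = e^{2πi/3}. -/
theorem three_term_class8
    (hirr : ¬ ∃ a b : ℚ, Fval (5/12) (7/12) / Fval (7/12) (17/12) =
      (a : ℝ) + (b : ℝ) * Real.sqrt 3) :
    (Fval (1/12) (11/12) : ℂ) + 16 * I * (Fval (11/12) (13/12) : ℂ) =
      Complex.exp (2 * (Real.pi : ℂ) * I / 3) ^ 2 *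
        (-4 * (Fval (5/12) (7/12) : ℂ) - 4 * I * (Fval (7/12) (17/12) : ℂ)) := by
  obtain ⟨h1, h2⟩ := Fval_relations
  have hζ : Complex.exp (2 * (Real.pi : ℂ) * I / 3) ^ 2 = -(1 / 2 : ℂ) - (√3 / 2 : ℝ) * I := by
    rw [← Complex.exp_nat_mul, show ((2 : ℕ) : ℂ) * (2 * (Real.pi : ℂ) * I / 3) =
      ((Real.pi / 3 + Real.pi : ℝ) : ℂ) * I by push_cast; ring, exp_mul_I, ← ofReal_cos,
      ← ofReal_sin, Real.cos_add_pi, Real.sin_add_pi, Real.cos_pi_div_three,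
      Real.sin_pi_div_three]
    push_cast
    ring
  rw [hζ]
  apply Complex.ext
  · simp
    linarith
  · simp
    linarith
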